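/- Let 0 ≤ α < n and m ∈ ℕ with m > 1 − α/n, and let T_{α,m} be the discrete fractional series operator. If n/(n−α) < q < ∞ and 0 < p ≤ nq/(n + αq), then there exists a constant C > 0 such that ‖T_{α,m} b‖_{ℓ^q(ℤ^n)} ≤ C ‖b‖_{ℓ^p(ℤ^n)} for all b ∈ ℓ^p(ℤ^n). -/

import Mathlib

open scoped ENNReal BigOperators Classical

noncomputable def eucZ {n : ℕ} (v : Fin n → ℤ) : ℝ :=
  Real.sqrt (∑ k, ((v k : ℝ)) ^ 2)

noncomputable def eucR {n : ℕ} (v : Fin n → ℝ) : ℝ :=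
  Real.sqrt (∑ k, (v k) ^ 2)

noncomputable def lpNorm {n : ℕ} (p : ℝ) (b : (Fin n → ℤ) → ℝ) : ℝ≥0∞ :=
  (∑' i : Fin n → ℤ, ENNReal.ofReal |b i| ^ p) ^ (1 / p)

noncomputable def Tfs {n m : ℕ} (al : Fin m → ℝ) (A : Fin m → Matrix (Fin n) (Fin n) ℤ)
    (b : (Fin n → ℤ) → ℝ) (j : Fin n → ℤ) : ℝ≥0∞ :=
  ∑' i : Fin n → ℤ,
    if ∀ k, i ≠ (A k).mulVec j then
      ENNReal.ofReal (|b i| / ∏ k, eucZ (i - (A k).mulVec j) ^ (al k))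
    else 0

noncomputable def Mfr {n : ℕ} (γ : ℝ) (b : (Fin n → ℤ) → ℝ) (j : Fin n → ℤ) : ℝ≥0∞ :=
  ⨆ N : ℕ, ENNReal.ofReal ((2 * (N : ℝ) + 1) ^ (γ - (n : ℝ)) *
    ∑ i ∈ Finset.Icc (fun k => j k - (N : ℤ)) (fun k => j k + (N : ℤ)), |b i|)

noncomputable def Iop {n : ℕ} (α : ℝ) (b : (Fin n → ℤ) → ℝ) (j : Fin n → ℤ) : ℝ≥0∞ :=
  ∑' i : Fin n → ℤ, if i ≠ j then ENNReal.ofReal (|b i| / eucZ (i - j) ^ ((n : ℝ) - α)) else 0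

def IsPAtom {n : ℕ} (p : ℝ) (d : ℕ) (a : (Fin n → ℤ) → ℝ) (i0 : Fin n → ℤ) (N : ℕ) : Prop :=
  (∀ i : Fin n → ℤ, a i ≠ 0 → ∀ t, |i t - i0 t| ≤ (N : ℤ)) ∧
  (∀ i : Fin n → ℤ, |a i| ≤ ((2 * (N : ℝ) + 1) ^ n) ^ (-(1 / p))) ∧
  (∀ β : Fin n → ℕ, (∑ t, β t) ≤ d →
    ∑ i ∈ Finset.Icc (fun t => i0 t - (N : ℤ)) (fun t => i0 t + (N : ℤ)),
      (∏ t, ((i t : ℝ)) ^ (β t)) * a i = 0)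

/-!
`ℓ^{p₀}`-boundedness with `p₀ = nq / (n + αq)` suffices, since `ℓ^p ⊆ ℓ^{p₀}` for `p ≤ p₀`. On the
support of the kernel `i - A k j` is a nonzero integer vector, so the kernel is bounded by a product
of negative powers of `⟨A k j, i⟩`, where `⟨x, y⟩ = 1 + ‖x - y‖`. Bounding every factor by the one
whose centre `A k j` is nearest to `i` turns this into a sum over `k` of Riesz kernels
`⟨j, i⟩ ^ (α - n)`, each composed with the injection `A k`.

If `α > 0`, the Hardy–Littlewood–Sobolev inequality applies to them. If `α = 0`, then
`⟨j, i⟩ ^ (-n)` just fails to be bounded on `ℓ^q`, so the other factors must be kept: as `A k - A l`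
is invertible, `⟨A l j, i⟩` dominates `⟨0, i⟩ + ⟨0, A k j⟩` if `A k j` is the nearest centre. This
leads to the kernels `⟨j, i⟩ ^ (-a) * (⟨0, i⟩ + ⟨0, j⟩) ^ (a - n)` with `0 < a < n`. These pass
Schur's test with power weights.
-/

open scoped NNReal

/-- `StrongType K p q`: the operator `f ↦ fun j ↦ ∑' i, f i * K i j` with nonnegative kernel `K` is
bounded from `ℓ^p(ι)` to `ℓ^q(κ)`. The norm inequality is raised to the power `q`, and it is enough
to test it on nonnegative `f`. -/
def StrongType {ι κ : Type*} (K : ι → κ → ℝ≥0∞) (p q : ℝ) : Prop :=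
  ∃ C : ℝ≥0, ∀ f : ι → ℝ≥0∞, ∑' j, (∑' i, f i * K i j) ^ q ≤ C * (∑' i, f i ^ p) ^ (q / p)

section TsumInequalities

variable {ι : Type*}

lemma tsum_subtype_le_of_le_mul {S T : Set ι} (hST : S ⊆ T) {f g : ι → ℝ≥0∞} {c B : ℝ≥0∞}
    (hfg : ∀ i ∈ S, f i ≤ c * g i) (hB : ∑' i : T, g i ≤ B) : ∑' i : S, f i ≤ c * B :=
  calc ∑' i : S, f i ≤ ∑' i : S, c * g i := ENNReal.tsum_le_tsum fun i ↦ hfg i i.2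
    _ = c * ∑' i : S, g i := ENNReal.tsum_mul_left
    _ ≤ c * B := by gcongr; exact (ENNReal.tsum_mono_subtype g hST).trans hB

lemma tsum_rpow_mul_rpow_le (f g : ι → ℝ≥0∞) {s t : ℝ} (hs : 0 ≤ s) (ht : 0 ≤ t)
    (hst : s + t = 1) : ∑' i, f i ^ s * g i ^ t ≤ (∑' i, f i) ^ s * (∑' i, g i) ^ t := by
  let _ : MeasurableSpace ι := ⊤
  simpa only [MeasureTheory.lintegral_count] using
    ENNReal.lintegral_mul_norm_pow_le (μ := MeasureTheory.Measure.count)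
      (Measurable.of_discrete (f := f)).aemeasurable (Measurable.of_discrete (f := g)).aemeasurable
      hs ht hst

lemma rpow_tsum_le_tsum_rpow (f : ι → ℝ≥0∞) {θ : ℝ} (hθ0 : 0 < θ) (hθ1 : θ ≤ 1) :
    (∑' i, f i) ^ θ ≤ ∑' i, f i ^ θ := by
  rw [← ENNReal.le_rpow_inv_iff hθ0, ENNReal.tsum_eq_iSup_sum]
  refine iSup_le fun S ↦ (ENNReal.le_rpow_inv_iff hθ0).2 ?_
  exact (Finset.le_sum_of_subadditive (· ^ θ) (by simp [hθ0])
    (fun a b ↦ ENNReal.rpow_add_le_add_rpow a b hθ0.le hθ1) S f).trans (ENNReal.sum_le_tsum S)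

lemma sum_rpow_le_of_forall_sum_mul_le (S : Finset ι) (F : ι → ℝ≥0) {q : ℝ} (hq : 1 < q) {C : ℝ≥0∞}
    (h : ∀ v : ι → ℝ≥0, ∑ j ∈ S, v j ≤ 1 → ∑ j ∈ S, (F j * v j ^ (1 - 1 / q) : ℝ≥0∞) ≤ C) :
    ∑ j ∈ S, (F j : ℝ≥0∞) ^ q ≤ C ^ q := by
  have hconj := Real.HolderConjugate.conjExponent hq
  obtain ⟨g, hg, hFg⟩ := (NNReal.isGreatest_Lp S F hconj).1
  have hexp : q.conjExponent * (1 - 1 / q) = 1 := by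
    rw [one_div, hconj.one_sub_inv, mul_inv_cancel₀ hconj.symm.ne_zero]
  have key := h (fun j ↦ g j ^ q.conjExponent) hg
  have hcoe (j : ι) : ((g j ^ q.conjExponent : ℝ≥0) : ℝ≥0∞) ^ (1 - 1 / q) = g j := by
    rw [← ENNReal.coe_rpow_of_nonneg _ (by simp [inv_le_one_of_one_le₀ hq.le]), ← NNReal.rpow_mul,
      hexp, NNReal.rpow_one]
  simp only [hcoe] at key
  rw [← ENNReal.rpow_inv_le_iff (zero_lt_one.trans hq)]
  have hFg' : ∑ j ∈ S, (F j * g j : ℝ≥0∞) = (∑ j ∈ S, (F j : ℝ≥0∞) ^ q) ^ q⁻¹ := by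
    simp only [← ENNReal.coe_rpow_of_nonneg _ hconj.nonneg]
    rw [← one_div, ← ENNReal.ofNNReal_finsetSum, ← ENNReal.coe_rpow_of_nonneg _ (by positivity),
      ← hFg]
    push_cast
    rfl
  exact hFg' ▸ key

lemma tsum_rpow_le_of_forall_tsum_mul_le (F : ι → ℝ≥0∞) {q : ℝ} (hq : 1 < q) {C : ℝ≥0}
    (h : ∀ v : ι → ℝ≥0∞, ∑' j, v j ≤ 1 → ∑' j, F j * v j ^ (1 - 1 / q) ≤ C) :
    ∑' j, F j ^ q ≤ (C : ℝ≥0∞) ^ q := by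
  have hF (j : ι) : F j ≠ ⊤ := by
    have := (ENNReal.le_tsum j).trans (h (Pi.single j 1) (tsum_pi_single j 1).le)
    exact ne_top_of_le_ne_top ENNReal.coe_ne_top (by simpa using this)
  lift F to ι → ℝ≥0 using hF
  rw [ENNReal.tsum_eq_iSup_sum]
  refine iSup_le fun S ↦ sum_rpow_le_of_forall_sum_mul_le S F hq fun v hv ↦ ?_
  let w : ι → ℝ≥0∞ := (S : Set ι).indicator fun j ↦ v j
  have hw : ∑' j, w j ≤ 1 := by
    rw [← tsum_subtype, Finset.tsum_subtype' S fun j ↦ (v j : ℝ≥0∞)]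
    exact_mod_cast hv
  calc ∑ j ∈ S, (F j : ℝ≥0∞) * (v j : ℝ≥0∞) ^ (1 - 1 / q)
      = ∑ j ∈ S, (F j : ℝ≥0∞) * w j ^ (1 - 1 / q) :=
        Finset.sum_congr rfl fun j hj ↦ by simp [w, hj]
    _ ≤ C := (ENNReal.sum_le_tsum S).trans (h w hw)

end TsumInequalities

namespace StrongType

variable {ι κ : Type*} {K L : ι → κ → ℝ≥0∞} {p q : ℝ}

lemma of_le (hq : 0 ≤ q) (hL : StrongType L p q) (c : ℝ≥0) (h : ∀ i j, K i j ≤ c * L i j) :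
    StrongType K p q := by
  obtain ⟨C, hC⟩ := hL
  refine ⟨c ^ q * C, fun f ↦ ?_⟩
  calc ∑' j, (∑' i, f i * K i j) ^ q
      ≤ ∑' j, (c * ∑' i, f i * L i j) ^ q := by
        gcongr with j
        rw [← ENNReal.tsum_mul_left]
        refine ENNReal.tsum_le_tsum fun i ↦ ?_
        calc f i * K i j ≤ f i * (c * L i j) := by gcongr; exact h i j
          _ = c * (f i * L i j) := by ring
    _ = c ^ q * ∑' j, (∑' i, f i * L i j) ^ q := by
        simp only [ENNReal.mul_rpow_of_nonneg _ _ hq, ENNReal.tsum_mul_left]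
    _ ≤ c ^ q * (C * (∑' i, f i ^ p) ^ (q / p)) := by gcongr; exact hC f
    _ = ((c ^ q * C : ℝ≥0) : ℝ≥0∞) * (∑' i, f i ^ p) ^ (q / p) := by
        rw [ENNReal.coe_mul, ENNReal.coe_rpow_of_nonneg _ hq, mul_assoc]

lemma sum {σ : Type*} (S : Finset σ) {K : σ → ι → κ → ℝ≥0∞} (hq : 1 ≤ q)
    (h : ∀ k ∈ S, StrongType (K k) p q) : StrongType (fun i j ↦ ∑ k ∈ S, K k i j) p q := by
  choose! C hC using h
  refine ⟨(S.card : ℝ≥0) ^ (q - 1) * ∑ k ∈ S, C k, fun f ↦ ?_⟩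
  calc ∑' j, (∑' i, f i * ∑ k ∈ S, K k i j) ^ q
      = ∑' j, (∑ k ∈ S, ∑' i, f i * K k i j) ^ q := by
        simp only [Finset.mul_sum, Summable.tsum_finsetSum fun _ _ ↦ ENNReal.summable]
    _ ≤ ∑' j, (S.card : ℝ≥0∞) ^ (q - 1) * ∑ k ∈ S, (∑' i, f i * K k i j) ^ q := by
        gcongr with j
        exact ENNReal.rpow_sum_le_const_mul_sum_rpow S _ hq
    _ = (S.card : ℝ≥0∞) ^ (q - 1) * ∑ k ∈ S, ∑' j, (∑' i, f i * K k i j) ^ q := by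
        rw [ENNReal.tsum_mul_left, Summable.tsum_finsetSum fun _ _ ↦ ENNReal.summable]
    _ ≤ (S.card : ℝ≥0∞) ^ (q - 1) * ∑ k ∈ S, C k * (∑' i, f i ^ p) ^ (q / p) := by
        gcongr with k hk
        exact hC k hk f
    _ = _ := by
        rw [← Finset.sum_mul, ENNReal.coe_mul, ENNReal.coe_rpow_of_nonneg _ (sub_nonneg.2 hq)]
        push_cast
        rw [mul_assoc]

lemma comp_right {κ' : Type*} (h : StrongType K p q) {φ : κ' → κ} (hφ : φ.Injective) :
    StrongType (fun i j ↦ K i (φ j)) p q :=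
  h.imp fun _ hC f ↦ (ENNReal.tsum_comp_le_tsum_of_injective hφ _).trans (hC f)

lemma anti_left {p₀ : ℝ} (h : StrongType K p₀ q) (hp : 0 < p) (hp₀ : p ≤ p₀) (hq : 0 ≤ q) :
    StrongType K p q := by
  have hp₀' := hp.trans_le hp₀
  refine h.imp fun C hC f ↦ (hC f).trans ?_
  have hsum : (∑' i, f i ^ p₀) ^ (p / p₀) ≤ ∑' i, f i ^ p := by
    refine (rpow_tsum_le_tsum_rpow _ (by positivity) ((div_le_one hp₀').2 hp₀)).trans_eq ?_
    simp only [← ENNReal.rpow_mul, mul_div_cancel₀ p hp₀'.ne']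
  calc C * (∑' i, f i ^ p₀) ^ (q / p₀)
      = C * ((∑' i, f i ^ p₀) ^ (p / p₀)) ^ (q / p) := by
        rw [← ENNReal.rpow_mul]; congr 2; field_simp
    _ ≤ C * (∑' i, f i ^ p) ^ (q / p) := by gcongr

lemma of_normalized (hp : 0 < p) (hq : 0 < q) {C : ℝ≥0}
    (h : ∀ u : ι → ℝ≥0∞, ∑' i, u i ≤ 1 → ∑' j, (∑' i, u i ^ (1 / p) * K i j) ^ q ≤ C) :
    StrongType K p q := by
  refine ⟨C + 1, fun f ↦ ?_⟩
  set N := ∑' i, f i ^ p with hN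
  rcases eq_or_ne N 0 with hN0 | hN0
  · have hf (i : ι) : f i = 0 := by
      simpa [hp, hp.not_gt] using ENNReal.tsum_eq_zero.1 hN0 i
    simp [hf, hq]
  rcases eq_or_ne N ⊤ with hNtop | hNtop
  · simp [hNtop, div_pos hq hp]
  have hf (i : ι) : f i = N ^ (1 / p) * (N⁻¹ * f i ^ p) ^ (1 / p) := by
    rw [← ENNReal.mul_rpow_of_nonneg _ _ (by positivity), ← mul_assoc,
      ENNReal.mul_inv_cancel hN0 hNtop, one_mul, ← ENNReal.rpow_mul, mul_one_div_cancel hp.ne',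
      ENNReal.rpow_one]
  have hu : ∑' i, N⁻¹ * f i ^ p ≤ 1 := by
    rw [ENNReal.tsum_mul_left, ← hN, ENNReal.inv_mul_cancel hN0 hNtop]
  calc ∑' j, (∑' i, f i * K i j) ^ q
      = ∑' j, (N ^ (1 / p) * ∑' i, (N⁻¹ * f i ^ p) ^ (1 / p) * K i j) ^ q := by
        congr! 3 with j
        rw [← ENNReal.tsum_mul_left]
        congr! 2 with i
        rw [← mul_assoc, ← hf]
    _ = N ^ (q / p) * ∑' j, (∑' i, (N⁻¹ * f i ^ p) ^ (1 / p) * K i j) ^ q := by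
        simp only [ENNReal.mul_rpow_of_nonneg _ _ hq.le, ENNReal.tsum_mul_left, ← ENNReal.rpow_mul]
        rw [one_div_mul_eq_div]
    _ ≤ N ^ (q / p) * (C + 1 : ℝ≥0) := by
        gcongr
        exact (h _ hu).trans (by simp)
    _ = (C + 1 : ℝ≥0) * N ^ (q / p) := mul_comm _ _

lemma of_bilinear (hp : 0 < p) (hq : 1 < q) {C : ℝ≥0}
    (h : ∀ (u : ι → ℝ≥0∞) (v : κ → ℝ≥0∞), ∑' i, u i ≤ 1 → ∑' j, v j ≤ 1 →
      ∑' j, ∑' i, u i ^ (1 / p) * v j ^ (1 - 1 / q) * K i j ≤ C) :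
    StrongType K p q := by
  have hq0 := zero_lt_one.trans hq
  refine of_normalized hp hq0 (C := C ^ q) fun u hu ↦ ?_
  rw [ENNReal.coe_rpow_of_nonneg _ hq0.le]
  refine tsum_rpow_le_of_forall_tsum_mul_le _ hq fun v hv ↦ (h u v hu hv).trans_eq' ?_
  simp only [← ENNReal.tsum_mul_right, mul_right_comm]

lemma schur_test (hq : 1 < q) {K₁ K₂ : ι → κ → ℝ≥0∞} {A B : ℝ≥0}
    (hK : ∀ i j, K i j ≤ K₁ i j ^ (1 / q) * K₂ i j ^ (1 - 1 / q))
    (h₁ : ∀ i, ∑' j, K₁ i j ≤ A) (h₂ : ∀ j, ∑' i, K₂ i j ≤ B) : StrongType K q q := by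
  have hq0 := zero_lt_one.trans hq
  have hq' : 0 ≤ 1 - 1 / q := by simp [inv_le_one_of_one_le₀ hq.le]
  refine of_bilinear hq0 hq (C := A ^ (1 / q) * B ^ (1 - 1 / q)) fun u v hu hv ↦ ?_
  have hsum₁ : ∑' x : κ × ι, u x.2 * K₁ x.2 x.1 ≤ A := by
    rw [ENNReal.tsum_prod', ENNReal.tsum_comm]
    calc ∑' i, ∑' j, u i * K₁ i j ≤ ∑' i, u i * A := by
          gcongr with i; rw [ENNReal.tsum_mul_left]; gcongr; exact h₁ i
      _ ≤ A := by rw [ENNReal.tsum_mul_right]; exact mul_le_of_le_one_left' hu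
  have hsum₂ : ∑' x : κ × ι, v x.1 * K₂ x.2 x.1 ≤ B := by
    rw [ENNReal.tsum_prod']
    calc ∑' j, ∑' i, v j * K₂ i j ≤ ∑' j, v j * B := by
          gcongr with j; rw [ENNReal.tsum_mul_left]; gcongr; exact h₂ j
      _ ≤ B := by rw [ENNReal.tsum_mul_right]; exact mul_le_of_le_one_left' hv
  calc ∑' j, ∑' i, u i ^ (1 / q) * v j ^ (1 - 1 / q) * K i j
      ≤ ∑' j, ∑' i, (u i * K₁ i j) ^ (1 / q) * (v j * K₂ i j) ^ (1 - 1 / q) := by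
        refine ENNReal.tsum_le_tsum fun j ↦ ENNReal.tsum_le_tsum fun i ↦ ?_
        rw [ENNReal.mul_rpow_of_nonneg _ _ (by positivity), ENNReal.mul_rpow_of_nonneg _ _ hq',
          mul_mul_mul_comm]
        gcongr
        exact hK i j
    _ = ∑' x : κ × ι, (u x.2 * K₁ x.2 x.1) ^ (1 / q) * (v x.1 * K₂ x.2 x.1) ^ (1 - 1 / q) :=
        ENNReal.tsum_prod.symm
    _ ≤ (∑' x : κ × ι, u x.2 * K₁ x.2 x.1) ^ (1 / q) *
          (∑' x : κ × ι, v x.1 * K₂ x.2 x.1) ^ (1 - 1 / q) :=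
        tsum_rpow_mul_rpow_le _ _ (by positivity) hq' (by ring)
    _ ≤ A ^ (1 / q) * B ^ (1 - 1 / q) := by gcongr
    _ = (A ^ (1 / q) * B ^ (1 - 1 / q) : ℝ≥0) := by
        rw [ENNReal.coe_mul, ENNReal.coe_rpow_of_nonneg _ (by positivity),
          ENNReal.coe_rpow_of_nonneg _ hq']

end StrongType

/-- The Japanese bracket `⟨x, y⟩ = 1 + dist x y`, a substitute for the distance which is never `0`,
so that its negative powers are not junk on the diagonal. -/
noncomputable def jdist {X : Type*} [PseudoMetricSpace X] (x y : X) : ℝ≥0 := 1 + nndist x y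

/-- `X` has polynomial growth of order `d`, uniformly in the centre: balls of radius `R` have
`O(R ^ d)` points. Radii are measured by `jdist`, so this is a condition at large scales only. -/
def HasGrowth (X : Type*) [PseudoMetricSpace X] (d : ℝ) : Prop :=
  ∃ C : ℝ≥0, ∀ (x : X) (R : ℝ≥0), ({y | jdist x y ≤ R}.encard : ℝ≥0∞) ≤ (C * R ^ d : ℝ≥0)

section JapaneseBracket

variable {X : Type*} [PseudoMetricSpace X]

lemma one_le_jdist (x y : X) : 1 ≤ jdist x y := le_self_add

lemma jdist_pos (x y : X) : 0 < jdist x y := zero_lt_one.trans_le (one_le_jdist x y)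

lemma jdist_comm (x y : X) : jdist x y = jdist y x := by rw [jdist, jdist, nndist_comm]

lemma jdist_triangle (x y z : X) : jdist x z ≤ jdist x y + jdist y z :=
  calc 1 + nndist x z ≤ 1 + (nndist x y + nndist y z) := by gcongr; exact nndist_triangle x y z
    _ ≤ 1 + (nndist x y + nndist y z) + 1 := le_self_add
    _ = (1 + nndist x y) + (1 + nndist y z) := by ring

end JapaneseBracket

namespace HasGrowth

variable {X : Type*} [PseudoMetricSpace X] {d : ℝ}

lemma tsum_annulus_le (h : HasGrowth X d) {a : ℝ} (ha : 0 ≤ a) :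
    ∃ C : ℝ≥0, ∀ (x : X) (r : ℝ≥0), 0 < r →
      ∑' y : {y | r ≤ jdist x y ∧ jdist x y ≤ 2 * r}, ((jdist x y ^ (-a) : ℝ≥0) : ℝ≥0∞)
        ≤ (C * r ^ (d - a) : ℝ≥0) := by
  obtain ⟨C, hC⟩ := h
  refine ⟨C * 2 ^ d, fun x r hr ↦ ?_⟩
  set S := {y | r ≤ jdist x y ∧ jdist x y ≤ 2 * r}
  calc ∑' y : S, ((jdist x y ^ (-a) : ℝ≥0) : ℝ≥0∞)
      ≤ ∑' _ : S, ((r ^ (-a) : ℝ≥0) : ℝ≥0∞) := by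
        refine ENNReal.tsum_le_tsum fun y ↦ ENNReal.coe_le_coe.2 ?_
        exact NNReal.rpow_le_rpow_of_nonpos hr y.2.1 (neg_nonpos.2 ha)
    _ = S.encard * (r ^ (-a) : ℝ≥0) := ENNReal.tsum_set_const S _
    _ ≤ (C * (2 * r) ^ d : ℝ≥0) * (r ^ (-a) : ℝ≥0) := by
        gcongr
        refine le_trans ?_ (hC x (2 * r))
        exact_mod_cast Set.encard_le_encard (s := S) fun y hy ↦ hy.2
    _ = (C * 2 ^ d * r ^ (d - a) : ℝ≥0) := by
        rw [← ENNReal.coe_mul, NNReal.mul_rpow, sub_eq_add_neg, NNReal.rpow_add hr.ne']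
        congr 1
        ring

/-- Summing over annuli of radii in geometric progression; ratio `2⁻¹` treats a neighbourhood of the
centre and ratio `2` a neighbourhood of infinity. -/
lemma tsum_le_of_subset_annuli (h : HasGrowth X d) {a : ℝ} (ha : 0 ≤ a) {c : ℝ≥0} (hc : 0 < c)
    (hcd : c ^ (d - a) < 1) :
    ∃ C : ℝ≥0, ∀ (x : X) (r : ℝ≥0) (S : Set X), 0 < r →
      (∀ y ∈ S, ∃ k : ℕ, r * c ^ k ≤ jdist x y ∧ jdist x y ≤ 2 * (r * c ^ k)) →
      ∑' y : S, ((jdist x y ^ (-a) : ℝ≥0) : ℝ≥0∞) ≤ (C * r ^ (d - a) : ℝ≥0) := by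
  obtain ⟨C, hC⟩ := h.tsum_annulus_le ha
  refine ⟨C * (1 - c ^ (d - a))⁻¹, fun x r S hr hS ↦ ?_⟩
  let T (k : ℕ) : Set X := {y | r * c ^ k ≤ jdist x y ∧ jdist x y ≤ 2 * (r * c ^ k)}
  let f (y : X) : ℝ≥0∞ := (jdist x y ^ (-a) : ℝ≥0)
  have hT (k : ℕ) :
      ∑' y : T k, f y ≤ (C * r ^ (d - a) : ℝ≥0) * ((c ^ (d - a) : ℝ≥0) : ℝ≥0∞) ^ k := by
    refine (hC x (r * c ^ k) (by positivity)).trans_eq ?_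
    rw [NNReal.mul_rpow, ← NNReal.rpow_natCast, ← NNReal.rpow_mul, mul_comm (k : ℝ),
      NNReal.rpow_mul, NNReal.rpow_natCast, ← mul_assoc]
    push_cast
    rfl
  calc ∑' y : S, f y
      ≤ ∑' y : ⋃ k, T k, f y := ENNReal.tsum_mono_subtype f fun y hy ↦ Set.mem_iUnion.2 (hS y hy)
    _ ≤ ∑' k, ∑' y : T k, f y := ENNReal.tsum_iUnion_le_tsum f T
    _ ≤ ∑' k, (C * r ^ (d - a) : ℝ≥0) * ((c ^ (d - a) : ℝ≥0) : ℝ≥0∞) ^ k :=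
        ENNReal.tsum_le_tsum hT
    _ = (C * r ^ (d - a) : ℝ≥0) * ((1 - c ^ (d - a))⁻¹ : ℝ≥0) := by
        rw [ENNReal.tsum_mul_left, ENNReal.tsum_geometric, ENNReal.coe_inv (tsub_pos_of_lt hcd).ne',
          ENNReal.coe_sub, ENNReal.coe_one]
    _ = (C * (1 - c ^ (d - a))⁻¹ * r ^ (d - a) : ℝ≥0) := by
        rw [← ENNReal.coe_mul, mul_right_comm]

lemma tsum_near_le (h : HasGrowth X d) {a : ℝ} (ha : 0 ≤ a) (had : a < d) :
    ∃ C : ℝ≥0, ∀ (x : X) (R : ℝ≥0), 0 < R →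
      ∑' y : {y | jdist x y ≤ R}, ((jdist x y ^ (-a) : ℝ≥0) : ℝ≥0∞) ≤ (C * R ^ (d - a) : ℝ≥0) := by
  obtain ⟨C, hC⟩ := h.tsum_le_of_subset_annuli ha (c := 2⁻¹) (by norm_num)
    (NNReal.rpow_lt_one (inv_lt_one_of_one_lt₀ one_lt_two) (sub_pos.2 had))
  refine ⟨C, fun x R hR ↦ ?_⟩
  refine (hC x (R / 2) _ (by positivity) fun y (hy : jdist x y ≤ R) ↦ ?_).trans ?_
  · obtain ⟨k, hk, hk'⟩ := exists_nat_pow_near_of_lt_one (x := jdist x y / R)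
      (div_pos (jdist_pos x y) hR) (div_le_one_of_le₀ hy hR.le) (y := 2⁻¹) (by norm_num)
      (inv_lt_one_of_one_lt₀ one_lt_two)
    rw [lt_div_iff₀ hR, pow_succ] at hk
    rw [div_le_iff₀ hR] at hk'
    refine ⟨k, hk.le.trans_eq' (by ring), hk'.trans_eq ?_⟩
    rw [← mul_assoc, mul_div_cancel₀ _ two_ne_zero, mul_comm]
  · have := sub_pos.2 had
    gcongr
    exact half_le_self zero_le

lemma tsum_far_le (h : HasGrowth X d) (hd : 0 ≤ d) {β : ℝ} (hβ : d < β) :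
    ∃ C : ℝ≥0, ∀ (x : X) (R : ℝ≥0), 0 < R →
      ∑' y : {y | R < jdist x y}, ((jdist x y ^ (-β) : ℝ≥0) : ℝ≥0∞) ≤ (C * R ^ (d - β) : ℝ≥0) := by
  obtain ⟨C, hC⟩ := h.tsum_le_of_subset_annuli (hd.trans hβ.le) (c := 2) two_pos
    (NNReal.rpow_lt_one_of_one_lt_of_neg one_lt_two (sub_neg.2 hβ))
  refine ⟨C, fun x R hR ↦ hC x R _ hR fun y (hy : R < jdist x y) ↦ ?_⟩
  obtain ⟨k, hk, hk'⟩ := exists_nat_pow_near ((one_le_div₀ hR).2 hy.le) one_lt_two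
  rw [le_div_iff₀ hR, mul_comm] at hk
  rw [div_lt_iff₀ hR, pow_succ] at hk'
  exact ⟨k, hk, hk'.le.trans_eq (by ring)⟩

lemma tsum_far_rpow_mul_le (h : HasGrowth X d) (hd : 0 ≤ d) {s a : ℝ} (hs : 0 ≤ s) (hs1 : s < 1)
    (ha : d * (1 - s) < a) :
    ∃ C : ℝ≥0, ∀ (u : X → ℝ≥0∞), ∑' i, u i ≤ 1 → ∀ (x : X) (R : ℝ≥0), 0 < R →
      ∑' i : {i | R < jdist x i}, u i ^ s * (jdist x i ^ (-a) : ℝ≥0)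
        ≤ (C * R ^ (d * (1 - s) - a) : ℝ≥0) := by
  have hs' : 0 < 1 - s := sub_pos.2 hs1
  obtain ⟨C, hC⟩ := h.tsum_far_le hd (β := a / (1 - s)) ((lt_div_iff₀ hs').2 ha)
  refine ⟨C ^ (1 - s), fun u hu x R hR ↦ ?_⟩
  have hpow (r : ℝ≥0) {β : ℝ} : ((r ^ β : ℝ≥0) : ℝ≥0∞) ^ (1 - s) = (r ^ (β * (1 - s)) : ℝ≥0) := by
    rw [← ENNReal.coe_rpow_of_nonneg _ hs'.le, NNReal.rpow_mul]
  set S := {i | R < jdist x i}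
  calc ∑' i : S, u i ^ s * (jdist x i ^ (-a) : ℝ≥0)
      = ∑' i : S, u i ^ s * ((jdist x i ^ (-(a / (1 - s))) : ℝ≥0) : ℝ≥0∞) ^ (1 - s) := by
        simp only [hpow, neg_mul, div_mul_cancel₀ a hs'.ne']
    _ ≤ (∑' i : S, u i) ^ s * (∑' i : S, ((jdist x i ^ (-(a / (1 - s))) : ℝ≥0) : ℝ≥0∞)) ^ (1 - s) :=
        tsum_rpow_mul_rpow_le _ _ hs hs'.le (by ring)
    _ ≤ 1 ^ s * ((C * R ^ (d - a / (1 - s)) : ℝ≥0) : ℝ≥0∞) ^ (1 - s) := by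
        gcongr
        · exact (ENNReal.tsum_comp_le_tsum_of_injective Subtype.val_injective u).trans hu
        · exact hC x R hR
    _ = (C ^ (1 - s) * R ^ (d * (1 - s) - a) : ℝ≥0) := by
        rw [ENNReal.one_rpow, one_mul, ENNReal.coe_mul, ENNReal.mul_rpow_of_nonneg _ _ hs'.le, hpow,
          ENNReal.coe_mul, ENNReal.coe_rpow_of_nonneg _ hs'.le, sub_mul, div_mul_cancel₀ a hs'.ne']

/-- The sum is split at the radius `R` with `R ^ (-d) = w`. -/
lemma tsum_sublevel_rpow_mul_le (h : HasGrowth X d) (hd : 0 < d) {s t : ℝ} (hs : 0 ≤ s)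
    (hs1 : s < 1) (ht1 : t < 1) (hst : 1 < s + t) :
    ∃ C : ℝ≥0, ∀ (u : X → ℝ≥0∞), ∑' i, u i ≤ 1 → ∀ (w : ℝ≥0), 0 < w → ∀ x : X,
      ∑' i : {i | u i ≤ w}, u i ^ s * (jdist x i ^ (-(d * (2 - s - t))) : ℝ≥0)
        ≤ (C * w ^ (1 - t) : ℝ≥0) := by
  set a := d * (2 - s - t) with ha
  obtain ⟨C₁, hC₁⟩ := h.tsum_near_le (a := a) (by nlinarith) (by nlinarith)
  obtain ⟨C₂, hC₂⟩ := h.tsum_far_rpow_mul_le hd.le hs hs1 (a := a) (by nlinarith)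
  refine ⟨C₁ + C₂, fun u hu w hw x ↦ ?_⟩
  let f (i : X) : ℝ≥0∞ := u i ^ s * (jdist x i ^ (-a) : ℝ≥0)
  have hpow (β : ℝ) : (w ^ (-d⁻¹)) ^ (d * β) = w ^ (-β) := by
    rw [← NNReal.rpow_mul]; congr 1; field_simp
  set R : ℝ≥0 := w ^ (-d⁻¹)
  have hR : 0 < R := NNReal.rpow_pos hw
  have hnear : ∑' i : ({i | u i ≤ w} ∩ {i | jdist x i ≤ R} : Set X), f i
      ≤ (C₁ * w ^ (1 - t) : ℝ≥0) :=
    calc ∑' i : ({i | u i ≤ w} ∩ {i | jdist x i ≤ R} : Set X), f i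
        ≤ (w : ℝ≥0∞) ^ s * (C₁ * R ^ (d - a) : ℝ≥0) :=
          tsum_subtype_le_of_le_mul Set.inter_subset_right
            (fun i hi ↦ mul_le_mul_left (ENNReal.rpow_le_rpow hi.1 hs) _) (hC₁ x R hR)
      _ = (C₁ * w ^ (1 - t) : ℝ≥0) := by
          rw [show d - a = d * (s + t - 1) by rw [ha]; ring, hpow,
            ← ENNReal.coe_rpow_of_nonneg _ hs, ← ENNReal.coe_mul, mul_left_comm,
            ← NNReal.rpow_add hw.ne']
          congr 3
          ring
  have hfar : ∑' i : {i | R < jdist x i}, f i ≤ (C₂ * w ^ (1 - t) : ℝ≥0) := by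
    refine (hC₂ u hu x R hR).trans_eq ?_
    rw [show d * (1 - s) - a = d * (t - 1) by rw [ha]; ring, hpow, neg_sub]
  calc ∑' i : {i | u i ≤ w}, f i
      ≤ ∑' i : ({i | u i ≤ w} ∩ {i | jdist x i ≤ R} ∪ {i | R < jdist x i} : Set X), f i :=
        ENNReal.tsum_mono_subtype f fun i hi ↦
          (le_or_gt (jdist x i) R).imp (fun hle ↦ ⟨hi, hle⟩) id
    _ ≤ _ := ENNReal.tsum_union_le f _ _
    _ ≤ (C₁ * w ^ (1 - t) : ℝ≥0) + (C₂ * w ^ (1 - t) : ℝ≥0) := add_le_add hnear hfar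
    _ = ((C₁ + C₂) * w ^ (1 - t) : ℝ≥0) := by rw [← ENNReal.coe_add, add_mul]

lemma tsum_tsum_sublevel_le (h : HasGrowth X d) (hd : 0 < d) {s t : ℝ} (hs : 0 ≤ s)
    (hs1 : s < 1) (ht : 0 < t) (ht1 : t < 1) (hst : 1 < s + t) :
    ∃ C : ℝ≥0, ∀ (u v : X → ℝ≥0∞), ∑' i, u i ≤ 1 → ∑' j, v j ≤ 1 →
      ∑' j, ∑' i : {i | u i ≤ v j}, u i ^ s * v j ^ t * (jdist j i ^ (-(d * (2 - s - t))) : ℝ≥0)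
        ≤ C := by
  obtain ⟨C, hC⟩ := h.tsum_sublevel_rpow_mul_le hd hs hs1 ht1 hst
  refine ⟨C, fun u v hu hv ↦ ?_⟩
  have hj (j : X) : ∑' i : {i | u i ≤ v j},
      u i ^ s * v j ^ t * (jdist j i ^ (-(d * (2 - s - t))) : ℝ≥0) ≤ C * v j := by
    rcases eq_or_ne (v j) 0 with h0 | h0
    · simp [h0, ht]
    have htop : v j ≠ ⊤ := ne_top_of_le_ne_top ENNReal.one_ne_top ((ENNReal.le_tsum j).trans hv)
    obtain ⟨w, hvw⟩ : ∃ w : ℝ≥0, w = v j := ⟨_, ENNReal.coe_toNNReal htop⟩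
    have hw : 0 < w := pos_iff_ne_zero.2 fun h ↦ h0 (by rw [← hvw, h, ENNReal.coe_zero])
    rw [← hvw]
    calc ∑' i : {i | u i ≤ w}, u i ^ s * (w : ℝ≥0∞) ^ t * (jdist j i ^ (-(d * (2 - s - t))) : ℝ≥0)
        = (w : ℝ≥0∞) ^ t *
            ∑' i : {i | u i ≤ w}, u i ^ s * (jdist j i ^ (-(d * (2 - s - t))) : ℝ≥0) := by
          rw [← ENNReal.tsum_mul_left]
          simp only [mul_assoc, mul_left_comm]
      _ ≤ (w : ℝ≥0∞) ^ t * (C * w ^ (1 - t) : ℝ≥0) := by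
          gcongr
          exact hC u hu w hw j
      _ = C * w := by
          rw [← ENNReal.coe_rpow_of_nonneg _ ht.le, ← ENNReal.coe_mul, mul_left_comm,
            ← NNReal.rpow_add hw.ne', add_sub_cancel, NNReal.rpow_one, ENNReal.coe_mul]
  calc _ ≤ ∑' j, C * v j := ENNReal.tsum_le_tsum hj
    _ ≤ C := by rw [ENNReal.tsum_mul_left]; exact mul_le_of_le_one_right' hv

/-- The Hardy–Littlewood–Sobolev inequality. In the bilinear form, the pairs `(i, j)` are split
according to which of `u i`, `v j` is larger. -/
theorem strongType_jdist_rpow (h : HasGrowth X d) (hd : 0 < d) {p q : ℝ} (hp : 1 < p)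
    (hpq : p < q) :
    StrongType (fun i j : X ↦ ((jdist j i ^ (-(d * (1 - 1 / p + 1 / q))) : ℝ≥0) : ℝ≥0∞)) p q := by
  have hp0 := zero_lt_one.trans hp
  have hq := hp.trans hpq
  have hqp : 1 / q < 1 / p := one_div_lt_one_div_of_lt hp0 hpq
  have hp1 : 1 / p < 1 := by rw [div_lt_one hp0]; exact hp
  have hq0 : 0 < 1 / q := by positivity
  set s := 1 / p
  set t := 1 - 1 / q with ht
  obtain ⟨C₁, hC₁⟩ := h.tsum_tsum_sublevel_le hd (s := s) (t := t) (by linarith) hp1 (by linarith)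
    (by linarith) (by linarith)
  obtain ⟨C₂, hC₂⟩ := h.tsum_tsum_sublevel_le hd (s := t) (t := s) (by linarith) (by linarith)
    (by linarith) hp1 (by linarith)
  refine StrongType.of_bilinear hp0 hq (C := C₁ + C₂) fun u v hu hv ↦ ?_
  let f (i j : X) : ℝ≥0∞ := u i ^ s * v j ^ t * (jdist j i ^ (-(d * (2 - s - t))) : ℝ≥0)
  rw [show 1 - s + 1 / q = 2 - s - t by rw [ht]; ring]
  calc ∑' j, ∑' i, f i j
      ≤ ∑' j, (∑' i : {i | u i ≤ v j}, f i j + ∑' i : {i | v j ≤ u i}, f i j) := by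
        gcongr with j
        rw [← tsum_univ (f · j), ← Set.eq_univ_of_forall (s := {i | u i ≤ v j} ∪ {i | v j ≤ u i})
          fun i ↦ le_total (u i) (v j)]
        exact ENNReal.tsum_union_le (f · j) _ _
    _ = ∑' j, ∑' i : {i | u i ≤ v j}, f i j + ∑' i, ∑' j : {j | v j ≤ u i}, f i j := by
        rw [ENNReal.tsum_add]
        congr 1
        simp only [fun j ↦ tsum_subtype {i | v j ≤ u i} (f · j),
          fun i ↦ tsum_subtype {j | v j ≤ u i} (f i)]
        exact ENNReal.tsum_comm
    _ ≤ C₁ + C₂ := by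
        refine add_le_add (hC₁ u v hu hv) ((hC₂ v u hv hu).trans_eq' ?_)
        congr! 4 with i j
        rw [mul_comm (v j ^ t), jdist_comm, sub_right_comm]
    _ = (C₁ + C₂ : ℝ≥0) := (ENNReal.coe_add _ _).symm

end HasGrowth

/-- The kernel `⟨j, i⟩ ^ (-a) * (⟨o, i⟩ + ⟨o, j⟩) ^ (-b)` with base point `o`, of critical order if
`a + b` is the growth exponent. The second factor supplies the decay making it bounded on `ℓ^q`. -/
noncomputable def critKernel {X : Type*} [PseudoMetricSpace X] (o : X) (a b : ℝ) (i j : X) : ℝ≥0 :=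
  jdist j i ^ (-a) * (jdist o i + jdist o j) ^ (-b)

section CriticalKernel

variable {X : Type*} [PseudoMetricSpace X]

lemma critKernel_comm (o : X) (a b : ℝ) (i j : X) :
    critKernel o a b i j = critKernel o a b j i := by
  rw [critKernel, critKernel, jdist_comm, add_comm]

lemma critKernel_mul_rpow_le (o : X) {a b σ : ℝ} (ha : 0 ≤ a) (hb : 0 ≤ b) (hσ : 0 ≤ σ) {i j : X}
    {x y z : ℝ≥0} (hx : 0 < x) (hy : 0 < y) (hz : 0 < z) (hxδ : x ≤ jdist j i)
    (hyo : y ≤ jdist o i + jdist o j) (hzi : z ≤ jdist o i) :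
    critKernel o a b i j * (jdist o j / jdist o i) ^ σ
      ≤ x ^ (-a) * y ^ (-b) * (jdist o j / z) ^ σ := by
  unfold critKernel
  gcongr ?_ * ?_ * ?_ ^ σ
  · exact NNReal.rpow_le_rpow_of_nonpos hx hxδ (neg_nonpos.2 ha)
  · exact NNReal.rpow_le_rpow_of_nonpos hy hyo (neg_nonpos.2 hb)
  · gcongr

lemma tsum_le_of_le_rpow_mul_div_rpow {S T : Set X} (hST : S ⊆ T) {f : X → ℝ≥0} {x : X}
    {R c C : ℝ≥0} (hR : 0 < R) {d τ : ℝ}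
    (hf : ∀ i ∈ S, f i ≤ c * (R ^ (-d) * (R / jdist x i) ^ τ))
    (hT : ∑' i : T, ((jdist x i ^ (-τ) : ℝ≥0) : ℝ≥0∞) ≤ (C * R ^ (d - τ) : ℝ≥0)) :
    ∑' i : S, (f i : ℝ≥0∞) ≤ (c * C : ℝ≥0) := by
  refine (tsum_subtype_le_of_le_mul hST (f := fun i ↦ (f i : ℝ≥0∞))
    (g := fun i ↦ (jdist x i ^ (-τ) : ℝ≥0)) (c := (c * R ^ (τ - d) : ℝ≥0)) (fun i hi ↦ ?_)
    hT).trans_eq ?_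
  · refine ENNReal.coe_le_coe.2 ((hf i hi).trans_eq ?_)
    rw [NNReal.div_rpow, NNReal.rpow_neg, NNReal.rpow_neg, NNReal.rpow_sub hR.ne']
    ring
  · rw [← ENNReal.coe_mul, mul_mul_mul_comm, ← NNReal.rpow_add hR.ne', sub_add_sub_cancel,
      sub_self, NNReal.rpow_zero, mul_one]

lemma critKernel_mul_rpow_le_near_left (o : X) {a b σ : ℝ} (ha : 0 ≤ a) (hb : 0 ≤ b) (hσ : 0 ≤ σ)
    {i j : X} (hi : jdist j i ≤ jdist o i) :
    critKernel o a b i j * (jdist o j / jdist o i) ^ σ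
      ≤ 2 ^ σ * (jdist o j ^ (-(a + b)) * (jdist o j / jdist j i) ^ a) := by
  have hJ := jdist_pos o j
  have hJI : jdist o j / 2 ≤ jdist o i := by
    rw [div_le_iff₀ two_pos, mul_two]
    exact (jdist_triangle o i j).trans (by rw [jdist_comm i j]; gcongr)
  refine (critKernel_mul_rpow_le o ha hb hσ (jdist_pos j i) hJ (half_pos hJ) le_rfl le_add_self
    hJI).trans_eq ?_
  rw [div_div_cancel₀ hJ.ne', NNReal.div_rpow, neg_add, NNReal.rpow_add hJ.ne']
  simp only [NNReal.rpow_neg]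
  field_simp

lemma critKernel_mul_rpow_le_far_left (o : X) {a b σ : ℝ} (ha : 0 ≤ a) (hb : 0 ≤ b) (hσ : 0 ≤ σ)
    {i j : X} (hi : jdist j i ≤ jdist o i) :
    critKernel o a b i j * (jdist o j / jdist o i) ^ σ
      ≤ 1 * (jdist o j ^ (-(a + b)) * (jdist o j / jdist j i) ^ (a + b + σ)) := by
  have hδ := jdist_pos j i
  have hJ := jdist_pos o j
  refine (critKernel_mul_rpow_le o ha hb hσ hδ hδ hδ le_rfl (hi.trans le_self_add) hi).trans_eq ?_
  simp only [NNReal.div_rpow, NNReal.rpow_neg, NNReal.rpow_add hJ.ne', NNReal.rpow_add hδ.ne']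
  field_simp

lemma critKernel_mul_rpow_le_near_right (o : X) {a b σ : ℝ} (ha : 0 ≤ a) (hb : 0 ≤ b) (hσ : 0 ≤ σ)
    {i j : X} (hi : jdist o i ≤ jdist j i) :
    critKernel o a b i j * (jdist o j / jdist o i) ^ σ
      ≤ 2 ^ a * (jdist o j ^ (-(a + b)) * (jdist o j / jdist o i) ^ σ) := by
  have hJ := jdist_pos o j
  have hJδ : jdist o j / 2 ≤ jdist j i := by
    rw [div_le_iff₀ two_pos, mul_two]
    exact (jdist_triangle o i j).trans (by rw [jdist_comm i j]; gcongr)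
  refine (critKernel_mul_rpow_le o ha hb hσ (half_pos hJ) hJ (jdist_pos o i) hJδ le_add_self
    le_rfl).trans_eq ?_
  rw [neg_add, NNReal.rpow_add hJ.ne']
  simp only [NNReal.div_rpow, NNReal.rpow_neg]
  field_simp

lemma critKernel_mul_rpow_le_far_right (o : X) {a b σ : ℝ} (ha : 0 ≤ a) (hb : 0 ≤ b) (hσ : 0 ≤ σ)
    {i j : X} (hi : jdist o i ≤ jdist j i) :
    critKernel o a b i j * (jdist o j / jdist o i) ^ σ
      ≤ 1 * (jdist o j ^ (-(a + b)) * (jdist o j / jdist o i) ^ (a + b + σ)) := by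
  have hI := jdist_pos o i
  have hJ := jdist_pos o j
  refine (critKernel_mul_rpow_le o ha hb hσ hI hI hI hi le_self_add le_rfl).trans_eq ?_
  simp only [NNReal.div_rpow, NNReal.rpow_neg, NNReal.rpow_add hJ.ne', NNReal.rpow_add hI.ne']
  field_simp

/-- With `δ = ⟨j, i⟩`, `I = ⟨o, i⟩` and `J = ⟨o, j⟩`, the sum over `i` is split according to whether
`δ` or `I` is smaller, and whether that one is smaller than `J`. -/
lemma HasGrowth.tsum_critKernel_mul_rpow_le {a b : ℝ} (h : HasGrowth X (a + b)) (o : X)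
    (ha : 0 ≤ a) (hb : 0 < b) {σ : ℝ} (hσ : 0 < σ) (hσd : σ < a + b) :
    ∃ C : ℝ≥0, ∀ j, ∑' i, ((critKernel o a b i j * (jdist o j / jdist o i) ^ σ : ℝ≥0) : ℝ≥0∞)
      ≤ C := by
  obtain ⟨C₁, hC₁⟩ := h.tsum_near_le (a := a) ha (by linarith)
  obtain ⟨C₂, hC₂⟩ := h.tsum_near_le hσ.le hσd
  obtain ⟨C₃, hC₃⟩ := h.tsum_far_le (β := a + b + σ) (by linarith) (by linarith)
  refine ⟨2 ^ σ * C₁ + 1 * C₃ + (2 ^ a * C₂ + 1 * C₃), fun j ↦ ?_⟩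
  set J := jdist o j
  have hJ : 0 < J := jdist_pos o j
  let f (i : X) : ℝ≥0 := critKernel o a b i j * (J / jdist o i) ^ σ
  let S₁ : Set X := {i | jdist j i ≤ jdist o i ∧ jdist j i ≤ J}
  let S₂ : Set X := {i | jdist j i ≤ jdist o i ∧ J < jdist j i}
  let S₃ : Set X := {i | jdist o i < jdist j i ∧ jdist o i ≤ J}
  let S₄ : Set X := {i | jdist o i < jdist j i ∧ J < jdist o i}
  have h₁ : ∑' i : S₁, (f i : ℝ≥0∞) ≤ (2 ^ σ * C₁ : ℝ≥0) :=
    tsum_le_of_le_rpow_mul_div_rpow (fun i hi ↦ hi.2) hJ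
      (fun i hi ↦ critKernel_mul_rpow_le_near_left o ha hb.le hσ.le hi.1) (hC₁ j J hJ)
  have h₂ : ∑' i : S₂, (f i : ℝ≥0∞) ≤ (1 * C₃ : ℝ≥0) :=
    tsum_le_of_le_rpow_mul_div_rpow (fun i hi ↦ hi.2) hJ
      (fun i hi ↦ critKernel_mul_rpow_le_far_left o ha hb.le hσ.le hi.1) (hC₃ j J hJ)
  have h₃ : ∑' i : S₃, (f i : ℝ≥0∞) ≤ (2 ^ a * C₂ : ℝ≥0) :=
    tsum_le_of_le_rpow_mul_div_rpow (fun i hi ↦ hi.2) hJ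
      (fun i hi ↦ critKernel_mul_rpow_le_near_right o ha hb.le hσ.le hi.1.le) (hC₂ o J hJ)
  have h₄ : ∑' i : S₄, (f i : ℝ≥0∞) ≤ (1 * C₃ : ℝ≥0) :=
    tsum_le_of_le_rpow_mul_div_rpow (fun i hi ↦ hi.2) hJ
      (fun i hi ↦ critKernel_mul_rpow_le_far_right o ha hb.le hσ.le hi.1.le) (hC₃ o J hJ)
  have hcover : (S₁ ∪ S₂) ∪ (S₃ ∪ S₄) = Set.univ := Set.eq_univ_of_forall fun i ↦
    (le_or_gt (jdist j i) (jdist o i)).imp (fun hi ↦ (le_or_gt _ J).imp (⟨hi, ·⟩) (⟨hi, ·⟩))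
      fun hi ↦ (le_or_gt _ J).imp (⟨hi, ·⟩) (⟨hi, ·⟩)
  have hunion (S T : Set X) := ENNReal.tsum_union_le (fun i ↦ (f i : ℝ≥0∞)) S T
  calc ∑' i, (f i : ℝ≥0∞)
      = ∑' i : ((S₁ ∪ S₂) ∪ (S₃ ∪ S₄) : Set X), (f i : ℝ≥0∞) := by
        rw [hcover, tsum_univ fun i ↦ (f i : ℝ≥0∞)]
    _ ≤ _ := (hunion _ _).trans (add_le_add ((hunion _ _).trans (add_le_add h₁ h₂))
        ((hunion _ _).trans (add_le_add h₃ h₄)))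
    _ = _ := by push_cast; rfl

theorem HasGrowth.strongType_critKernel {a b : ℝ} (h : HasGrowth X (a + b)) (o : X)
    (ha : 0 ≤ a) (hb : 0 < b) {q : ℝ} (hq : 1 < q) :
    StrongType (fun i j : X ↦ (critKernel o a b i j : ℝ≥0∞)) q q := by
  have hd : 0 < a + b := by linarith
  have hq0 : 0 < 1 / q := by positivity
  have hq1 : 1 / q < 1 := by rw [div_lt_one (by positivity)]; exact hq
  let K (σ : ℝ) (i j : X) : ℝ≥0 := critKernel o a b i j * (jdist o j / jdist o i) ^ σ
  obtain ⟨A, hA⟩ := h.tsum_critKernel_mul_rpow_le o ha hb (mul_pos hd (sub_pos.2 hq1))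
    (mul_lt_of_lt_one_right hd (sub_lt_self 1 hq0))
  obtain ⟨B, hB⟩ := h.tsum_critKernel_mul_rpow_le o ha hb (mul_pos hd hq0)
    (mul_lt_of_lt_one_right hd hq1)
  refine StrongType.schur_test hq (A := A) (B := B)
    (K₁ := fun i j ↦ (K ((a + b) * (1 - 1 / q)) j i : ℝ≥0))
    (K₂ := fun i j ↦ (K ((a + b) * (1 / q)) i j : ℝ≥0)) (fun i j ↦ le_of_eq ?_) hA hB
  have hI := (jdist_pos o i).ne'
  have hJ := (jdist_pos o j).ne'
  simp only [K, critKernel_comm o a b j i]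
  rw [← ENNReal.coe_rpow_of_nonneg _ hq0.le, ← ENNReal.coe_rpow_of_nonneg _ (sub_nonneg.2 hq1.le),
    ← ENNReal.coe_mul, NNReal.mul_rpow, NNReal.mul_rpow, ← NNReal.rpow_mul, ← NNReal.rpow_mul,
    mul_mul_mul_comm, ← NNReal.rpow_add_of_nonneg _ hq0.le (sub_nonneg.2 hq1.le), add_sub_cancel,
    NNReal.rpow_one, mul_right_comm (a + b), ← NNReal.mul_rpow, div_mul_div_cancel₀ hJ, div_self hI,
    NNReal.one_rpow, mul_one]

end CriticalKernel

section ProductKernel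

variable {X σ : Type*} [PseudoMetricSpace X]

lemma rpow_sum_of_pos {x : ℝ≥0} (hx : 0 < x) (a : σ → ℝ) (S : Finset σ) :
    x ^ ∑ k ∈ S, a k = ∏ k ∈ S, x ^ a k :=
  NNReal.eq (by push_cast; exact Real.rpow_sum_of_pos (NNReal.coe_pos.2 hx) a S)

lemma jdist_add_jdist_le_of_separated {o i y z : X} {C : ℝ≥0} (hy : jdist o y ≤ C * jdist y z)
    (hi : jdist y i ≤ jdist z i) : jdist o i + jdist o y ≤ (4 * C + 1) * jdist z i := by
  have hyz : jdist y z ≤ 2 * jdist z i := by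
    rw [two_mul]
    exact (jdist_triangle y i z).trans (by rw [jdist_comm i z]; gcongr)
  have hoy : jdist o y ≤ C * (2 * jdist z i) := hy.trans (by gcongr)
  calc jdist o i + jdist o y ≤ (jdist o y + jdist y i) + jdist o y := by
        gcongr; exact jdist_triangle o y i
    _ ≤ (C * (2 * jdist z i) + jdist z i) + C * (2 * jdist z i) := by gcongr
    _ = (4 * C + 1) * jdist z i := by ring

variable [Fintype σ] [Nonempty σ] {a : σ → ℝ}

lemma prod_jdist_rpow_le_sum (ha : ∀ k, 0 ≤ a k) (i : X) (y : σ → X) :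
    ∏ k, jdist (y k) i ^ (-a k) ≤ ∑ k, jdist (y k) i ^ (-∑ l, a l) := by
  obtain ⟨k, hk⟩ := Finite.exists_min fun k ↦ jdist (y k) i
  have hδ := jdist_pos (y k) i
  calc ∏ l, jdist (y l) i ^ (-a l)
      ≤ ∏ l, jdist (y k) i ^ (-a l) := Finset.prod_le_prod' fun l _ ↦
        NNReal.rpow_le_rpow_of_nonpos hδ (hk l) (neg_nonpos.2 (ha l))
    _ = jdist (y k) i ^ (-∑ l, a l) := by rw [← rpow_sum_of_pos hδ, Finset.sum_neg_distrib]
    _ ≤ ∑ l, jdist (y l) i ^ (-∑ l, a l) :=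
        Finset.single_le_sum_of_canonicallyOrdered (f := fun l ↦ jdist (y l) i ^ (-∑ l, a l))
          (Finset.mem_univ k)

lemma prod_jdist_rpow_le_sum_critKernel (ha : ∀ k, 0 ≤ a k) (o i : X) {y : σ → X} {C : ℝ≥0}
    (hy : ∀ k l, k ≠ l → jdist o (y k) ≤ C * jdist (y k) (y l)) :
    ∏ k, jdist (y k) i ^ (-a k) ≤
      (4 * C + 1) ^ (∑ k, a k) * ∑ k, critKernel o (a k) (∑ l, a l - a k) i (y k) := by
  classical
  obtain ⟨k, hk⟩ := Finite.exists_min fun k ↦ jdist (y k) i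
  have hD : 0 < jdist o i + jdist o (y k) := add_pos (jdist_pos o i) (jdist_pos o (y k))
  set D := jdist o i + jdist o (y k)
  set M := 4 * C + 1
  have hM : 1 ≤ M := le_add_self
  have hDM : 0 < D / M := by positivity
  have herase : ∑ l ∈ Finset.univ.erase k, a l = ∑ l, a l - a k :=
    eq_sub_of_add_eq' (Finset.add_sum_erase _ a (Finset.mem_univ k))
  have hfar : ∏ l ∈ Finset.univ.erase k, jdist (y l) i ^ (-a l)
      ≤ M ^ (∑ l, a l) * D ^ (-(∑ l, a l - a k)) :=
    calc ∏ l ∈ Finset.univ.erase k, jdist (y l) i ^ (-a l)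
        ≤ ∏ l ∈ Finset.univ.erase k, (D / M) ^ (-a l) := by
          refine Finset.prod_le_prod' fun l hl ↦
            NNReal.rpow_le_rpow_of_nonpos hDM ?_ (neg_nonpos.2 (ha l))
          rw [div_le_iff₀' (by positivity)]
          exact jdist_add_jdist_le_of_separated (hy k l (Finset.ne_of_mem_erase hl).symm) (hk l)
      _ = M ^ (∑ l, a l - a k) * D ^ (-(∑ l, a l - a k)) := by
          rw [← rpow_sum_of_pos hDM, Finset.sum_neg_distrib, herase, NNReal.div_rpow,
            NNReal.rpow_neg M, div_inv_eq_mul, mul_comm]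
      _ ≤ M ^ (∑ l, a l) * D ^ (-(∑ l, a l - a k)) := by
          gcongr
          exact sub_le_self _ (ha k)
  calc ∏ l, jdist (y l) i ^ (-a l)
      = jdist (y k) i ^ (-a k) * ∏ l ∈ Finset.univ.erase k, jdist (y l) i ^ (-a l) :=
        (Finset.mul_prod_erase _ _ (Finset.mem_univ k)).symm
    _ ≤ jdist (y k) i ^ (-a k) * (M ^ (∑ l, a l) * D ^ (-(∑ l, a l - a k))) := by gcongr
    _ = M ^ (∑ l, a l) * critKernel o (a k) (∑ l, a l - a k) i (y k) := mul_left_comm _ _ _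
    _ ≤ M ^ (∑ l, a l) * ∑ k, critKernel o (a k) (∑ l, a l - a k) i (y k) := by
        gcongr
        exact Finset.single_le_sum_of_canonicallyOrdered
          (f := fun k ↦ critKernel o (a k) (∑ l, a l - a k) i (y k)) (Finset.mem_univ k)

variable {κ : Type*} {φ : σ → κ → X}

theorem HasGrowth.strongType_prod_jdist {d : ℝ} (h : HasGrowth X d) (hd : 0 < d) {p q : ℝ}
    (hp : 1 < p) (hpq : p < q) (hφ : ∀ k, (φ k).Injective) (ha : ∀ k, 0 ≤ a k)
    (hsum : ∑ k, a k = d * (1 - 1 / p + 1 / q)) :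
    StrongType (fun i j ↦ ((∏ k, jdist (φ k j) i ^ (-a k) : ℝ≥0) : ℝ≥0∞)) p q := by
  have hq := hp.trans hpq
  refine (StrongType.sum Finset.univ hq.le fun k _ ↦
    (h.strongType_jdist_rpow hd hp hpq).comp_right (hφ k)).of_le (zero_le_one.trans hq.le) 1
    fun i j ↦ ?_
  rw [ENNReal.coe_one, one_mul, ← hsum]
  exact_mod_cast prod_jdist_rpow_le_sum ha i fun k ↦ φ k j

theorem HasGrowth.strongType_prod_jdist_of_separated (h : HasGrowth X (∑ k, a k)) {q : ℝ}
    (hq : 1 < q) (hφ : ∀ k, (φ k).Injective) (ha : ∀ k, 0 ≤ a k) (ha' : ∀ k, a k < ∑ l, a l) (o : X)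
    {C : ℝ≥0} (hsep : ∀ k l, k ≠ l → ∀ j, jdist o (φ k j) ≤ C * jdist (φ k j) (φ l j)) :
    StrongType (fun i j ↦ ((∏ k, jdist (φ k j) i ^ (-a k) : ℝ≥0) : ℝ≥0∞)) q q := by
  have hcrit (k : σ) :
      StrongType (fun i j ↦ (critKernel o (a k) (∑ l, a l - a k) i (φ k j) : ℝ≥0∞)) q q :=
    HasGrowth.strongType_critKernel (by rwa [add_sub_cancel]) o (ha k) (sub_pos.2 (ha' k)) hq
      |>.comp_right (hφ k)
  refine (StrongType.sum Finset.univ hq.le fun k _ ↦ hcrit k).of_le (zero_le_one.trans hq.le)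
    ((4 * C + 1) ^ (∑ k, a k)) fun i j ↦ ?_
  exact_mod_cast prod_jdist_rpow_le_sum_critKernel ha o i fun k l hkl ↦ hsep k l hkl j

end ProductKernel

section IntegerLattice

variable {ι : Type*} [Fintype ι]

lemma card_Icc_ceil_floor_le (x : ℤ) {R : ℝ≥0} (hR : 1 ≤ R) :
    ((Finset.Icc ⌈(x - (R - 1) : ℝ)⌉ ⌊(x + (R - 1) : ℝ)⌋).card : ℝ≥0) ≤ 2 * R := by
  have hlen : (⌊(x + (R - 1) : ℝ)⌋ + 1 - ⌈(x - (R - 1) : ℝ)⌉ : ℝ) ≤ 2 * R := by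
    linarith [Int.floor_le (x + (R - 1) : ℝ), Int.le_ceil (x - (R - 1) : ℝ)]
  have hnonneg : 0 ≤ ⌊(x + (R - 1) : ℝ)⌋ + 1 - ⌈(x - (R - 1) : ℝ)⌉ := by
    have hR' : (0 : ℝ) ≤ R - 1 := sub_nonneg.2 (NNReal.one_le_coe.2 hR)
    have h₁ : x ≤ ⌊(x + (R - 1) : ℝ)⌋ := Int.le_floor.2 (le_add_of_nonneg_right hR')
    have h₂ : ⌈(x - (R - 1) : ℝ)⌉ ≤ x := Int.ceil_le.2 (sub_le_self _ hR')
    lia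
  rw [Int.card_Icc, ← NNReal.coe_le_coe, NNReal.coe_natCast, ← Int.cast_natCast,
    Int.toNat_of_nonneg hnonneg]
  exact_mod_cast hlen

theorem hasGrowth_pi_int : HasGrowth (ι → ℤ) (Fintype.card ι) := by
  classical
  refine ⟨2 ^ Fintype.card ι, fun x R ↦ ?_⟩
  rcases lt_or_ge R 1 with hR | hR
  · have hempty : {y | jdist x y ≤ R} = ∅ :=
      Set.eq_empty_of_forall_notMem fun y hy ↦ (hR.trans_le (one_le_jdist x y)).not_ge hy
    simp [hempty]
  let S (t : ι) : Finset ℤ := Finset.Icc ⌈(x t - (R - 1) : ℝ)⌉ ⌊(x t + (R - 1) : ℝ)⌋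
  have hsub : {y | jdist x y ≤ R} ⊆ Fintype.piFinset S := by
    intro y (hy : 1 + nndist x y ≤ R)
    rw [← NNReal.coe_le_coe, NNReal.coe_add, NNReal.coe_one, coe_nndist, ← le_sub_iff_add_le'] at hy
    refine Finset.mem_coe.2 (Fintype.mem_piFinset.2 fun t ↦ ?_)
    rw [← Finset.mem_coe, Finset.coe_Icc, ← Int.closedBall_eq_Icc, Metric.mem_closedBall']
    exact (dist_le_pi_dist x y t).trans hy
  calc ({y | jdist x y ≤ R}.encard : ℝ≥0∞)
      ≤ (Fintype.piFinset S).card := by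
        exact_mod_cast (Set.encard_le_encard hsub).trans_eq (Set.encard_coe_eq_coe_finsetCard _)
    _ = ((∏ t, ((S t).card : ℝ≥0) : ℝ≥0) : ℝ≥0∞) := by
        rw [Fintype.card_piFinset]
        push_cast
        rfl
    _ ≤ (2 ^ Fintype.card ι * R ^ (Fintype.card ι : ℝ) : ℝ≥0) := by
        rw [NNReal.rpow_natCast, ← mul_pow, ← Finset.card_univ]
        exact ENNReal.coe_le_coe.2
          (Finset.prod_le_pow_card _ _ _ fun t _ ↦ card_Icc_ceil_floor_le (x t) hR)

open scoped Matrix.Norms.Operator in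
lemma exists_nnnorm_mulVec_le [DecidableEq ι] (A : Matrix ι ι ℤ) {B : Matrix ι ι ℤ}
    (hB : B.det ≠ 0) : ∃ C : ℝ≥0, ∀ v, ‖A.mulVec v‖₊ ≤ C * ‖B.mulVec v‖₊ := by
  refine ⟨‖A * B.adjugate‖₊, fun v ↦ ?_⟩
  have hcancel : (A * B.adjugate).mulVec (B.mulVec v) = B.det • A.mulVec v := by
    rw [Matrix.mulVec_mulVec, mul_assoc, Matrix.adjugate_mul, Matrix.mul_smul, mul_one,
      Matrix.smul_mulVec]
  have hdet : 1 ≤ ‖B.det‖₊ := by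
    rw [← NNReal.natCast_natAbs]
    exact_mod_cast Int.natAbs_pos.2 hB
  calc ‖A.mulVec v‖₊ ≤ ‖B.det‖₊ * ‖A.mulVec v‖₊ := le_mul_of_one_le_left' hdet
    _ = ‖(A * B.adjugate).mulVec (B.mulVec v)‖₊ := by rw [hcancel, nnnorm_smul]
    _ ≤ ‖A * B.adjugate‖₊ * ‖B.mulVec v‖₊ := Matrix.linfty_opNNNorm_mulVec _ _

lemma exists_jdist_mulVec_le [DecidableEq ι] {σ : Type*} [Finite σ] {A : σ → Matrix ι ι ℤ}
    (hA : ∀ k l, k ≠ l → (A k - A l).det ≠ 0) :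
    ∃ C : ℝ≥0, ∀ k l, k ≠ l → ∀ v,
      jdist 0 ((A k).mulVec v) ≤ C * jdist ((A k).mulVec v) ((A l).mulVec v) := by
  choose! c hc using fun k l hkl ↦ exists_nnnorm_mulVec_le (A k) (hA k l hkl)
  obtain ⟨C, hC⟩ := Finite.exists_le fun x : σ × σ ↦ c x.1 x.2
  refine ⟨1 + C, fun k l hkl v ↦ ?_⟩
  rw [jdist, jdist, nndist_zero_left, nndist_eq_nnnorm, ← Matrix.sub_mulVec]
  calc 1 + ‖(A k).mulVec v‖₊ ≤ 1 + C * ‖(A k - A l).mulVec v‖₊ := by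
        gcongr
        exact (hc k l hkl v).trans (by gcongr; exact hC (k, l))
    _ ≤ 1 + C * ‖(A k - A l).mulVec v‖₊ + (C + ‖(A k - A l).mulVec v‖₊) := le_self_add
    _ = (1 + C) * (1 + ‖(A k - A l).mulVec v‖₊) := by ring

end IntegerLattice

section FractionalSeries

variable {n m : ℕ} {al : Fin m → ℝ} {A : Fin m → Matrix (Fin n) (Fin n) ℤ} {p q : ℝ}

/-- The kernel of the fractional series operator `Tfs al A`, extended by zero to the excluded pairs
`i = A k j`. -/
noncomputable def tfsKernel (al : Fin m → ℝ) (A : Fin m → Matrix (Fin n) (Fin n) ℤ)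
    (i j : Fin n → ℤ) : ℝ≥0∞ :=
  if ∀ k, i ≠ (A k).mulVec j then
    ENNReal.ofReal (∏ k, eucZ (i - (A k).mulVec j) ^ al k)⁻¹
  else 0

lemma tfs_eq_tsum_tfsKernel (b : (Fin n → ℤ) → ℝ) (j : Fin n → ℤ) :
    Tfs al A b j = ∑' i, ENNReal.ofReal |b i| * tfsKernel al A i j := by
  refine tsum_congr fun i ↦ ?_
  rw [tfsKernel, mul_ite, mul_zero]
  congr 1
  rw [div_eq_mul_inv, ENNReal.ofReal_mul (abs_nonneg _)]

lemma norm_le_eucZ (v : Fin n → ℤ) : ‖v‖ ≤ eucZ v := by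
  refine (pi_norm_le_iff_of_nonneg (Real.sqrt_nonneg _)).2 fun k ↦ ?_
  rw [Int.norm_eq_abs]
  exact Real.abs_le_sqrt
    (Finset.single_le_sum (f := fun k ↦ (v k : ℝ) ^ 2) (fun _ _ ↦ sq_nonneg _) (Finset.mem_univ k))

lemma jdist_le_two_mul_eucZ {i y : Fin n → ℤ} (hiy : i ≠ y) : jdist y i ≤ 2 * eucZ (i - y) := by
  have hone : 1 ≤ dist i y := by
    obtain ⟨k, hk⟩ := Function.ne_iff.1 hiy
    exact (Int.pairwise_one_le_dist hk).trans (dist_le_pi_dist i y k)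
  have hle : dist i y ≤ eucZ (i - y) := by
    rw [dist_eq_norm]
    exact norm_le_eucZ _
  rw [jdist_comm, jdist, NNReal.coe_add, NNReal.coe_one, coe_nndist]
  linarith

lemma inv_eucZ_rpow_le {i y : Fin n → ℤ} (hiy : i ≠ y) {a : ℝ} (ha : 0 ≤ a) :
    (eucZ (i - y) ^ a)⁻¹ ≤ (2 ^ a * jdist y i ^ (-a) : ℝ≥0) := by
  have hδ : (0 : ℝ) < jdist y i := jdist_pos _ _
  have hle := jdist_le_two_mul_eucZ hiy
  calc (eucZ (i - y) ^ a)⁻¹ ≤ ((jdist y i / 2 : ℝ) ^ a)⁻¹ := by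
        gcongr
        linarith
    _ = (2 ^ a * jdist y i ^ (-a) : ℝ≥0) := by
        rw [Real.div_rpow hδ.le zero_le_two, inv_div, NNReal.rpow_neg, ← div_eq_mul_inv]
        norm_cast

lemma tfsKernel_le (hal : ∀ k, 0 ≤ al k) (i j : Fin n → ℤ) :
    tfsKernel al A i j ≤ (2 ^ ∑ k, al k : ℝ≥0) *
      ((∏ k, jdist ((A k).mulVec j) i ^ (-al k) : ℝ≥0) : ℝ≥0∞) := by
  unfold tfsKernel
  split_ifs with hij
  swap
  · exact zero_le
  rw [← ENNReal.coe_mul, ← Finset.prod_inv_distrib]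
  refine ENNReal.ofReal_le_coe.2 ?_
  calc ∏ k, (eucZ (i - (A k).mulVec j) ^ al k)⁻¹
      ≤ ∏ k, ((2 ^ al k * jdist ((A k).mulVec j) i ^ (-al k) : ℝ≥0) : ℝ) :=
        Finset.prod_le_prod (fun k _ ↦ inv_nonneg.2 (Real.rpow_nonneg (Real.sqrt_nonneg _) _))
          fun k _ ↦ inv_eucZ_rpow_le (hij k) (hal k)
    _ = ((2 ^ ∑ k, al k) * ∏ k, jdist ((A k).mulVec j) i ^ (-al k) : ℝ≥0) := by
        rw [← NNReal.coe_prod, Finset.prod_mul_distrib, rpow_sum_of_pos two_pos]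

theorem StrongType.exists_tfs_le_lpNorm (h : StrongType (tfsKernel al A) p q) (hq : 0 < q) :
    ∃ C : ℝ, 0 < C ∧ ∀ b : (Fin n → ℤ) → ℝ,
      (∑' j, Tfs al A b j ^ q) ^ (1 / q) ≤ ENNReal.ofReal C * lpNorm p b := by
  obtain ⟨C, hC⟩ := h
  refine ⟨C ^ (1 / q) + 1, by positivity, fun b ↦ ?_⟩
  calc (∑' j, Tfs al A b j ^ q) ^ (1 / q)
      ≤ (C * (∑' i, ENNReal.ofReal |b i| ^ p) ^ (q / p)) ^ (1 / q) := by
        simp only [tfs_eq_tsum_tfsKernel]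
        gcongr
        exact hC _
    _ = (C ^ (1 / q) : ℝ≥0) * lpNorm p b := by
        rw [ENNReal.mul_rpow_of_nonneg _ _ (by positivity), ← ENNReal.rpow_mul, lpNorm,
          ENNReal.coe_rpow_of_nonneg _ (by positivity)]
        congr 2
        field_simp
    _ ≤ ENNReal.ofReal (C ^ (1 / q) + 1) * lpNorm p b := by
        gcongr
        rw [← ENNReal.ofReal_coe_nnreal, NNReal.coe_rpow]
        exact ENNReal.ofReal_le_ofReal (le_add_of_nonneg_right zero_le_one)

theorem strongType_tfsKernel (hn : 0 < n) [Nonempty (Fin m)] (hal : ∀ k, 0 ≤ al k)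
    (hA : ∀ k, (A k).det ≠ 0) (hp : 1 < p) (hpq : p < q)
    (hsum : ∑ k, al k = n * (1 - 1 / p + 1 / q)) : StrongType (tfsKernel al A) p q := by
  have hgrowth : HasGrowth (Fin n → ℤ) n := by simpa using hasGrowth_pi_int (ι := Fin n)
  exact (hgrowth.strongType_prod_jdist (Nat.cast_pos.2 hn) hp hpq
    (fun k ↦ Matrix.mulVec_injective_of_det_ne_zero (hA k)) hal hsum).of_le
    (zero_le_one.trans (hp.trans hpq).le) _ (tfsKernel_le hal)

theorem strongType_tfsKernel_of_det_sub_ne_zero [Nontrivial (Fin m)] (hal : ∀ k, 0 < al k)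
    (hA : ∀ k, (A k).det ≠ 0) (hA' : ∀ k l, k ≠ l → (A k - A l).det ≠ 0) (hq : 1 < q)
    (hsum : ∑ k, al k = n) : StrongType (tfsKernel al A) q q := by
  have hgrowth : HasGrowth (Fin n → ℤ) (∑ k, al k) := by
    simpa [hsum] using hasGrowth_pi_int (ι := Fin n)
  have hlt (k : Fin m) : al k < ∑ l, al l := by
    obtain ⟨l, hl⟩ := exists_ne k
    exact Finset.single_lt_sum hl (Finset.mem_univ k) (Finset.mem_univ l) (hal l)
      fun _ _ _ ↦ (hal _).le
  obtain ⟨C, hC⟩ := exists_jdist_mulVec_le hA'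
  exact (hgrowth.strongType_prod_jdist_of_separated hq
    (fun k ↦ Matrix.mulVec_injective_of_det_ne_zero (hA k)) (fun k ↦ (hal k).le) hlt 0 hC).of_le
    (zero_le_one.trans hq.le) _ (tfsKernel_le fun k ↦ (hal k).le)

end FractionalSeries

theorem stmt15 (n : ℕ) (hn : 1 ≤ n) (α : ℝ) (hα0 : 0 ≤ α) (hαn : α < n)
    (m : ℕ) (hm : 1 - α / n < m)
    (al : Fin m → ℝ) (hal : ∀ k, 0 < al k) (hsum : ∑ k, al k = n - α)
    (A : Fin m → Matrix (Fin n) (Fin n) ℤ) (hA : ∀ k, (A k).det ≠ 0)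
    (hA0 : α = 0 → ∀ k l, k ≠ l → (A k - A l).det ≠ 0)
    (p q : ℝ) (hq1 : (n : ℝ) / (n - α) < q) (hp0 : 0 < p)
    (hpq : p ≤ n * q / (n + α * q)) :
    ∃ C : ℝ, 0 < C ∧ ∀ b : (Fin n → ℤ) → ℝ,
      (∑' j : Fin n → ℤ, (Tfs al A b j) ^ q) ^ (1 / q) ≤ ENNReal.ofReal C * lpNorm p b := by
  have hn' : (0 : ℝ) < n := Nat.cast_pos.2 hn
  have hqα : n < q * (n - α) := (div_lt_iff₀ (sub_pos.2 hαn)).1 hq1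
  have hq : 1 < q := ((one_le_div (sub_pos.2 hαn)).2 (sub_le_self _ hα0)).trans_lt hq1
  have hq0 : 0 < q := zero_lt_one.trans hq
  suffices h : StrongType (tfsKernel al A) (n * q / (n + α * q)) q from
    (h.anti_left hp0 hpq hq0.le).exists_tfs_le_lpNorm hq0
  rcases hα0.eq_or_lt with rfl | hα
  · have : Nontrivial (Fin m) := Fin.nontrivial_iff_two_le.2 (by
      exact_mod_cast (by simpa using hm : (1 : ℝ) < m))
    rw [zero_mul, add_zero, mul_div_cancel_left₀ q hn'.ne']
    exact strongType_tfsKernel_of_det_sub_ne_zero hal hA (hA0 rfl) hq (by simpa using hsum)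
  · have : Nonempty (Fin m) := Fin.pos_iff_nonempty.1 (by
      exact_mod_cast (sub_pos.2 ((div_lt_one hn').2 hαn)).trans hm)
    refine strongType_tfsKernel hn (fun k ↦ (hal k).le) hA ?_ ?_ ?_
    · rw [lt_div_iff₀ (by positivity)]
      linarith
    · rw [div_lt_iff₀ (by positivity)]
      linarith [mul_pos hq0 (mul_pos hα hq0)]
    · rw [hsum]
      field_simp
      ring
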